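/- arXiv:math/0204052 — 2 statements merged into one kernel-verified Lean document; each statement's English description precedes it below -/
import Mathlib

section
/- (Khovanskii's theorem) Let S be a commutative monoid and A a finite nonempty subset of S. Then there exists a polynomial p(t) with rational coefficients and an integer h_0 such that the cardinality of the h-fold sumset hA equals p(h) for all h ≥ h_0. -/
open Pointwise

theorem Finset.mem_nsmul_iff_exists_sum_nsmul {S ι : Type*} [AddCommMonoid S] [DecidableEq S]
    [Fintype ι] [DecidableEq ι] {A : Finset S} (e : ι ≃ A) {h : ℕ} {s : S} :
    s ∈ h • A ↔ ∃ x : ι → ℕ, ∑ i, x i = h ∧ ∑ i, x i • (e i : S) = s := by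
  induction h generalizing s with
  | zero =>
    simp only [zero_nsmul, Finset.mem_zero, Finset.sum_eq_zero_iff, Finset.mem_univ, true_implies]
    constructor
    · rintro rfl
      exact ⟨0, by simp, by simp⟩
    · rintro ⟨x, hx, rfl⟩
      simp [hx]
  | succ h ih =>
    rw [succ_nsmul, Finset.mem_add]
    constructor
    · rintro ⟨t, ht, a, ha, rfl⟩
      obtain ⟨x, hx, rfl⟩ := ih.1 ht
      refine ⟨x + Pi.single (e.symm ⟨a, ha⟩) 1, ?_, ?_⟩
      · simp [Finset.sum_add_distrib, hx]
      · simp [Finset.sum_add_distrib, add_nsmul, Pi.single_apply, ite_smul]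
    · rintro ⟨x, hx, rfl⟩
      obtain ⟨i, hi⟩ : ∃ i, x i ≠ 0 := by
        by_contra! hx0
        simp [hx0] at hx
      obtain ⟨y, rfl⟩ : ∃ y, x = y + Pi.single i 1 := by
        refine ⟨x - Pi.single i 1, (tsub_add_cancel_of_le fun j => ?_).symm⟩
        rcases eq_or_ne j i with rfl | hj
        · simpa using Nat.one_le_iff_ne_zero.2 hi
        · simp [hj]
      refine ⟨∑ j, y j • (e j : S), ih.2 ⟨y, ?_, rfl⟩, e i, (e i).2, ?_⟩
      · simpa [Finset.sum_add_distrib] using hx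
      · simp [Finset.sum_add_distrib, add_nsmul, Pi.single_apply, ite_smul]

/-- A function `ℕ → ℚ` which agrees with a polynomial at all sufficiently large arguments. -/
def EventuallyPolynomial (f : ℕ → ℚ) : Prop :=
  ∃ p : Polynomial ℚ, ∃ N : ℕ, ∀ n ≥ N, f n = p.eval (n : ℚ)

namespace EventuallyPolynomial

variable {f g : ℕ → ℚ}

theorem congr (hf : EventuallyPolynomial f) (N : ℕ) (hfg : ∀ n ≥ N, g n = f n) :
    EventuallyPolynomial g := by
  obtain ⟨p, M, hp⟩ := hf
  exact ⟨p, max M N, fun n hn => by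
    rw [hfg n (le_of_max_le_right hn), hp n (le_of_max_le_left hn)]⟩

theorem const (c : ℚ) : EventuallyPolynomial fun _ => c :=
  ⟨Polynomial.C c, 0, by simp⟩

theorem add (hf : EventuallyPolynomial f) (hg : EventuallyPolynomial g) :
    EventuallyPolynomial fun n => f n + g n := by
  obtain ⟨p, M, hp⟩ := hf
  obtain ⟨q, N, hq⟩ := hg
  exact ⟨p + q, max M N, fun n hn => by
    simp only [hp n (le_of_max_le_left hn), hq n (le_of_max_le_right hn), Polynomial.eval_add]⟩

theorem sum {ι : Type*} (s : Finset ι) {F : ι → ℕ → ℚ}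
    (hF : ∀ i ∈ s, EventuallyPolynomial (F i)) :
    EventuallyPolynomial fun n => ∑ i ∈ s, F i n := by
  classical
  induction s using Finset.induction_on with
  | empty => simpa using const 0
  | insert i s hi ih =>
    simp only [Finset.sum_insert hi]
    exact (hF i (by simp)).add (ih fun j hj => hF j (by simp [hj]))

theorem comp_tsub (hf : EventuallyPolynomial f) (j : ℕ) :
    EventuallyPolynomial fun n => f (n - j) := by
  obtain ⟨p, N, hp⟩ := hf
  refine ⟨p.comp (Polynomial.X - Polynomial.C (j : ℚ)), N + j, fun n hn => ?_⟩
  beta_reduce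
  rw [hp _ (by omega), Nat.cast_sub (by omega)]
  simp

theorem comp_succ (hf : EventuallyPolynomial f) : EventuallyPolynomial fun n => f (n + 1) := by
  obtain ⟨p, N, hp⟩ := hf
  refine ⟨p.comp (Polynomial.X + 1), N, fun n hn => ?_⟩
  beta_reduce
  rw [hp _ (by omega)]
  simp

theorem exists_eval_eq_sum_range (p : Polynomial ℚ) :
    ∃ q : Polynomial ℚ, ∀ n : ℕ, q.eval (n : ℚ) = ∑ k ∈ Finset.range n, p.eval (k : ℚ) := by
  induction p using Polynomial.induction_on' with
  | add p₁ p₂ h₁ h₂ =>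
    obtain ⟨q₁, hq₁⟩ := h₁
    obtain ⟨q₂, hq₂⟩ := h₂
    exact ⟨q₁ + q₂, fun n => by simp [hq₁, hq₂, Finset.sum_add_distrib]⟩
  | monomial d a =>
    refine ⟨Polynomial.C (a / (d + 1)) *
      (Polynomial.bernoulli d.succ - Polynomial.C (_root_.bernoulli d.succ)), fun n => ?_⟩
    have hd : (d + 1 : ℚ) ≠ 0 := by positivity
    simp only [Polynomial.eval_mul, Polynomial.eval_sub, Polynomial.eval_C,
      ← Polynomial.sum_range_pow_eq_bernoulli_sub, Polynomial.eval_monomial, ← Finset.mul_sum]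
    field_simp

theorem sum_range (hf : EventuallyPolynomial f) :
    EventuallyPolynomial fun n => ∑ k ∈ Finset.range n, f k := by
  obtain ⟨p, N, hp⟩ := hf
  obtain ⟨q, hq⟩ := exists_eval_eq_sum_range p
  refine ⟨q + Polynomial.C (∑ k ∈ Finset.range N, (f k - p.eval (k : ℚ))), N, fun n hn => ?_⟩
  obtain ⟨m, rfl⟩ := Nat.exists_eq_add_of_le hn
  beta_reduce
  rw [Polynomial.eval_add, Polynomial.eval_C, hq, Finset.sum_range_add, Finset.sum_range_add,
    Finset.sum_sub_distrib, Finset.sum_congr rfl fun k _ => hp (N + k) (by omega)]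
  ring

end EventuallyPolynomial

open Finset Finset.Nat

theorem IsLowerSet.exists_forall_cons_mem_iff {k : ℕ} {D : Set (Fin (k + 1) → ℕ)}
    (hD : IsLowerSet D) : ∃ J : ℕ, ∀ j ≥ J, ∀ x : Fin k → ℕ,
      (Fin.cons j x : Fin (k + 1) → ℕ) ∈ D ↔ (Fin.cons J x : Fin (k + 1) → ℕ) ∈ D := by
  have hfin : {m | Minimal (· ∈ Dᶜ) m}.Finite :=
    WellQuasiOrderedLE.finite_of_isAntichain (setOfPred_minimal_antichain _)
  obtain ⟨J, hJ⟩ := (hfin.image fun m => m 0).bddAbove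
  refine ⟨J, fun j hj x => ⟨fun h => hD (Fin.cons_le_cons.2 ⟨hj, le_rfl⟩) h, fun h => ?_⟩⟩
  by_contra hjx
  obtain ⟨m, hm, hmin⟩ := exists_minimal_le_of_wellFoundedLT (· ∈ Dᶜ) _ hjx
  refine hmin.prop (hD (fun i => ?_) h)
  refine Fin.cases ?_ (fun i => ?_) i
  · exact hJ ⟨m, hmin, rfl⟩
  · exact hm i.succ

open Classical in
theorem Finset.Nat.card_filter_antidiagonalTuple_succ (k h : ℕ) (D : Set (Fin (k + 1) → ℕ)) :
    #{x ∈ antidiagonalTuple (k + 1) h | x ∈ D} = ∑ j ∈ range (h + 1),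
      #{x ∈ antidiagonalTuple k (h - j) | (Fin.cons j x : Fin (k + 1) → ℕ) ∈ D} := by
  rw [card_eq_sum_card_fiberwise (f := fun x => x 0) (t := range (h + 1))]
  · refine sum_congr rfl fun j hj => ?_
    have hj : j ≤ h := by simpa [Nat.lt_succ_iff] using hj
    refine (card_bij (fun x _ => (Fin.cons j x : Fin (k + 1) → ℕ)) ?_ ?_ ?_).symm
    · intro x hx
      simp only [mem_filter, mem_antidiagonalTuple] at hx ⊢
      refine ⟨⟨?_, hx.2⟩, rfl⟩
      rw [Fin.sum_cons, hx.1]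
      omega
    · intro x _ y _ hxy
      exact (Fin.cons_inj.1 hxy).2
    · intro y hy
      simp only [mem_filter, mem_antidiagonalTuple] at hy
      obtain ⟨⟨hsum, hyD⟩, rfl⟩ := hy
      refine ⟨Fin.tail y, ?_, Fin.cons_self_tail y⟩
      simp only [mem_filter, mem_antidiagonalTuple, Fin.cons_self_tail]
      refine ⟨?_, hyD⟩
      rw [Fin.sum_univ_succ] at hsum
      simp only [Fin.tail]
      omega
  · intro x hx
    simp only [coe_filter, Set.mem_ofPred_eq, mem_antidiagonalTuple, Fin.sum_univ_succ] at hx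
    simp only [coe_range, Set.mem_Iio]
    omega

open Classical in
theorem IsLowerSet.eventuallyPolynomial_card_antidiagonalTuple {k : ℕ} {D : Set (Fin k → ℕ)}
    (hD : IsLowerSet D) :
    EventuallyPolynomial fun h => #{x ∈ antidiagonalTuple k h | x ∈ D} := by
  induction k with
  | zero =>
    refine (EventuallyPolynomial.const 0).congr 1 fun n hn => ?_
    obtain ⟨m, rfl⟩ := Nat.exists_eq_add_of_le' hn
    simp
  | succ k ih =>
    have hslice (j : ℕ) : EventuallyPolynomial fun h =>
        #{x ∈ antidiagonalTuple k h | (Fin.cons j x : Fin (k + 1) → ℕ) ∈ D} :=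
      ih (D := {x | (Fin.cons j x : Fin (k + 1) → ℕ) ∈ D})
        fun x y hyx hx => hD (Fin.cons_le_cons.2 ⟨le_rfl, hyx⟩) hx
    obtain ⟨J, hJ⟩ := hD.exists_forall_cons_mem_iff
    refine ((EventuallyPolynomial.sum (range J) fun j _ => (hslice j).comp_tsub j).add
      ((hslice J).sum_range.comp_succ.comp_tsub J)).congr J fun h hh => ?_
    obtain ⟨n, rfl⟩ := Nat.exists_eq_add_of_le hh
    rw [card_filter_antidiagonalTuple_succ, add_assoc, sum_range_add, Nat.cast_add, Nat.cast_sum,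
      Nat.cast_sum, Nat.add_sub_cancel_left, ← sum_range_reflect _ (n + 1)]
    congr 1
    refine sum_congr rfl fun i hi => ?_
    have hi : i < n + 1 := by simpa using hi
    rw [show J + n - (J + (n + 1 - 1 - i)) = i by omega]
    simp only [hJ (J + _) (Nat.le_add_right J _)]

theorem AddMonoidHom.isLowerSet_lex_least {k : ℕ} {M : Type*} [AddCommMonoid M]
    (φ : (Fin k → ℕ) →+ M) :
    IsLowerSet {x : Fin k → ℕ | ∀ y, φ y = φ x → toLex x ≤ toLex y} := by
  intro w x hx hw y hy
  obtain ⟨z, rfl⟩ := exists_add_of_le hx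
  have := hw (y + z) (by rw [map_add, map_add, hy])
  rwa [toLex_add, toLex_add, add_le_add_iff_right] at this

theorem stmt_8 {S : Type*} [AddCommMonoid S] [DecidableEq S]
    (A : Finset S) (hA : A.Nonempty) :
    ∃ p : Polynomial ℚ, ∃ h₀ : ℕ, ∀ h ≥ h₀,
      ((h • A).card : ℚ) = p.eval (h : ℚ) := by
  classical
  let e : Fin A.card ≃ A := A.equivFin.symm
  let φ : (Fin A.card → ℕ) →+ ℕ × S :=
    { toFun x := (∑ i, x i, ∑ i, x i • (e i : S))
      map_zero' := by simp
      map_add' x y := by simp [sum_add_distrib, add_nsmul] }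
  refine (φ.isLowerSet_lex_least.eventuallyPolynomial_card_antidiagonalTuple).congr 0
    fun h _ => congrArg Nat.cast ?_
  refine (card_bij (fun x _ => (φ x).2) ?_ ?_ ?_).symm
  · intro x hx
    simp only [mem_filter, mem_antidiagonalTuple] at hx
    exact (mem_nsmul_iff_exists_sum_nsmul e).2 ⟨x, hx.1, rfl⟩
  · intro x hx y hy hxy
    simp only [mem_filter, mem_antidiagonalTuple, Set.mem_ofPred_eq] at hx hy
    have hφ : φ x = φ y := Prod.ext (hx.1.trans hy.1.symm) hxy
    exact toLex_inj.1 (le_antisymm (hx.2 y hφ.symm) (hy.2 x hφ))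
  · intro s hs
    obtain ⟨x, hx, hxs⟩ := (mem_nsmul_iff_exists_sum_nsmul e).1 hs
    obtain ⟨y, hy, hmin⟩ := exists_min_image
      ((antidiagonalTuple A.card h).filter fun y => φ y = φ x) toLex
      ⟨x, by simp [mem_antidiagonalTuple, hx]⟩
    simp only [mem_filter, mem_antidiagonalTuple] at hy hmin
    refine ⟨y, ?_, (congrArg Prod.snd hy.2).trans hxs⟩
    simp only [mem_filter, mem_antidiagonalTuple, Set.mem_ofPred_eq]
    refine ⟨hy.1, fun z hz => hmin z ⟨?_, hz.trans hy.2⟩⟩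
    exact (congrArg Prod.fst hz).trans hy.1
end

section
/- Let S be a commutative monoid and A a finite nonempty subset of S with |A| = k. Then there exists a polynomial p(t) of degree at most k - 1 such that |hA| = p(h) for all sufficiently large h. -/
open Pointwise

namespace Finset

variable {ι : Type*} [DecidableEq ι]

lemma card_piAntidiag_nat (s : Finset ι) (n : ℕ) :
    (piAntidiag s n).card = (s.card + n - 1).choose n := by
  rw [← card_finsuppAntidiag_nat_eq_choose, finsuppAntidiag, card_map, card_attach]

variable [Fintype ι]

lemma card_filter_le_piAntidiag_univ (m : ι → ℕ) [DecidablePred (m ≤ ·)] {h : ℕ}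
    (hm : ∑ i, m i ≤ h) :
    ((piAntidiag univ h).filter (m ≤ ·)).card =
      (piAntidiag (univ : Finset ι) (h - ∑ i, m i)).card := by
  rw [← card_map (s := piAntidiag univ (h - ∑ i, m i)) (addLeftEmbedding m)]
  congr 1
  ext x
  simp only [mem_filter, mem_piAntidiag, mem_univ, implies_true, and_true, mem_map,
    addLeftEmbedding_apply]
  constructor
  · rintro ⟨hx, hmx⟩
    refine ⟨x - m, ?_, add_tsub_cancel_of_le hmx⟩
    have : ∑ i, x i = ∑ i, m i + ∑ i, (x - m) i := by
      rw [← sum_add_distrib]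
      exact sum_congr rfl fun i _ ↦ (add_tsub_cancel_of_le (hmx i)).symm
    change ∑ i, x i = h at hx
    change ∑ i, (x - m) i = _
    omega
  · rintro ⟨y, hy, rfl⟩
    refine ⟨?_, le_self_add⟩
    change ∑ i, y i = _ at hy
    simp only [Pi.add_apply, sum_add_distrib]
    omega

open scoped Classical in
/-- The number of points of height `h` lying above `m₀` and outside finitely many translated
orthants is eventually a polynomial in `h`. -/
lemma exists_polynomial_card_filter_not_le [Nonempty ι] (M : Finset (ι → ℕ)) (m₀ : ι → ℕ) :
    ∃ p : Polynomial ℚ, p.natDegree ≤ Fintype.card ι - 1 ∧ ∃ h₀ : ℕ, ∀ h ≥ h₀,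
      (((piAntidiag univ h).filter fun x ↦ m₀ ≤ x ∧ ∀ m ∈ M, ¬ m ≤ x).card : ℚ) =
        p.eval (h : ℚ) := by
  induction M using Finset.induction_on generalizing m₀ with
  | empty =>
    refine ⟨Polynomial.preHilbertPoly ℚ (Fintype.card ι - 1) (∑ i, m₀ i),
      (Polynomial.natDegree_preHilbertPoly ..).le, ∑ i, m₀ i, fun h hh ↦ ?_⟩
    have hι : 0 < Fintype.card ι := Fintype.card_pos
    rw [Polynomial.preHilbertPoly_eq_choose_sub_add _ _ hh]
    simp only [notMem_empty, false_imp_iff, implies_true, and_true]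
    rw [card_filter_le_piAntidiag_univ _ hh, card_piAntidiag_nat, card_univ,
      show Fintype.card ι + (h - ∑ i, m₀ i) - 1 = h - ∑ i, m₀ i + (Fintype.card ι - 1) by omega,
      Nat.choose_symm_add]
  | insert a M _ ih =>
    obtain ⟨p, hp, h₁, hp'⟩ := ih m₀
    obtain ⟨q, hq, h₂, hq'⟩ := ih (m₀ ⊔ a)
    refine ⟨p - q, (Polynomial.natDegree_sub_le _ _).trans (max_le hp hq), max h₁ h₂,
      fun h hh ↦ ?_⟩
    rw [Polynomial.eval_sub, ← hp' h (le_of_max_le_left hh), ← hq' h (le_of_max_le_right hh),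
      eq_sub_iff_add_eq, ← Nat.cast_add, Nat.cast_inj, ← card_union_of_disjoint]
    · congr 1
      ext x
      simp only [mem_union, mem_filter, mem_insert, forall_eq_or_imp, sup_le_iff]
      tauto
    · rw [disjoint_left]
      simp only [mem_filter, mem_insert, forall_eq_or_imp, sup_le_iff]
      tauto

lemma exists_polynomial_card_filter_notMem_of_isUpperSet [Nonempty ι] {U : Set (ι → ℕ)}
    (hU : IsUpperSet U) [DecidablePred (· ∈ U)] :
    ∃ p : Polynomial ℚ, p.natDegree ≤ Fintype.card ι - 1 ∧ ∃ h₀ : ℕ, ∀ h ≥ h₀,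
      (((piAntidiag univ h).filter (· ∉ U)).card : ℚ) = p.eval (h : ℚ) := by
  have hfin : {x | Minimal (· ∈ U) x}.Finite :=
    WellQuasiOrderedLE.finite_of_isAntichain (setOfPred_minimal_antichain _)
  obtain ⟨p, hp, h₀, hp'⟩ := exists_polynomial_card_filter_not_le hfin.toFinset 0
  refine ⟨p, hp, h₀, fun h hh ↦ ?_⟩
  rw [← hp' h hh]
  congr 1
  congr 1
  ext x
  simp only [mem_filter, Set.Finite.mem_toFinset, Set.mem_ofPred_eq, zero_le, true_and]
  refine and_congr_right fun _ ↦ ⟨fun hx m hm hmx ↦ hx (hU hmx hm.prop), fun hx hxU ↦ ?_⟩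
  obtain ⟨m, hmx, hm⟩ := exists_minimal_le_of_wellFoundedLT (· ∈ U) x hxU
  exact hx m hm hmx

lemma nsmul_image_univ {S : Type*} [AddCommMonoid S] [DecidableEq S] (a : ι → S) (h : ℕ) :
    h • univ.image a = (piAntidiag univ h).image fun x ↦ ∑ i, x i • a i := by
  induction h with
  | zero => simp [← singleton_zero]
  | succ h ih =>
    rw [succ_nsmul, ih]
    ext s
    simp only [mem_add, mem_image, mem_piAntidiag, mem_univ, implies_true, and_true, true_and]
    constructor
    · rintro ⟨_, ⟨x, hx, rfl⟩, _, ⟨i, rfl⟩, rfl⟩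
      refine ⟨x + Pi.single i 1, ?_, ?_⟩
      · simp [sum_add_distrib, hx]
      · simp [sum_add_distrib, add_smul, Pi.single_apply, ite_smul]
    · rintro ⟨x, hx, rfl⟩
      obtain ⟨i, -, hi⟩ : ∃ i ∈ univ, x i ≠ 0 := exists_ne_zero_of_sum_ne_zero (hx.trans_ne h.succ_ne_zero)
      obtain ⟨y, rfl⟩ : ∃ y, x = y + Pi.single i 1 := by
        refine ⟨x - Pi.single i 1, (tsub_add_cancel_of_le ?_).symm⟩
        intro j
        obtain rfl | hj := eq_or_ne j i
        · simpa [Nat.one_le_iff_ne_zero] using hi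
        · simp [hj]
      refine ⟨_, ⟨y, ?_, rfl⟩, _, ⟨i, rfl⟩, ?_⟩
      · simpa [sum_add_distrib] using hx
      · simp [sum_add_distrib, add_smul, Pi.single_apply, ite_smul]

end Finset

section Representation

variable {ι S : Type*} [Fintype ι] [LinearOrder ι] [AddCommMonoid S]

/-- The exponent vectors that are not lexicographically minimal among those of the same height
representing the same element as a combination of `a`. -/
def nonminimalRepresentations (a : ι → S) : Set (ι → ℕ) :=
  {x | ∃ y : ι → ℕ, ∑ i, y i = ∑ i, x i ∧ ∑ i, y i • a i = ∑ i, x i • a i ∧ toLex y < toLex x}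

lemma isUpperSet_nonminimalRepresentations (a : ι → S) :
    IsUpperSet (nonminimalRepresentations a) := by
  rintro x z hxz ⟨y, hyx, hya, hlt⟩
  obtain ⟨w, rfl⟩ := exists_add_of_le hxz
  refine ⟨y + w, ?_, ?_, ?_⟩
  · simp [Finset.sum_add_distrib, hyx]
  · simp [Finset.sum_add_distrib, add_smul, hya]
  · rw [toLex_add, toLex_add]
    exact add_lt_add_left hlt _

lemma card_nsmul_image_univ [DecidableEq S] (a : ι → S) (h : ℕ)
    [DecidablePred (· ∈ nonminimalRepresentations a)] :
    (h • Finset.univ.image a).card =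
      ((Finset.piAntidiag Finset.univ h).filter (· ∉ nonminimalRepresentations a)).card := by
  rw [Finset.nsmul_image_univ, ← Finset.card_image_of_injOn (f := fun x ↦ ∑ i, x i • a i)
    (s := (Finset.piAntidiag Finset.univ h).filter (· ∉ nonminimalRepresentations a))]
  · congr 1
    refine (Finset.image_subset_iff.2 fun x hx ↦ ?_).antisymm
      (Finset.image_subset_image (Finset.filter_subset _ _))
    obtain ⟨y, hy, hmin⟩ := Finset.exists_min_image
      ((Finset.piAntidiag Finset.univ h).filter fun y ↦ ∑ i, y i • a i = ∑ i, x i • a i) toLex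
      ⟨x, by simp [hx]⟩
    simp only [Finset.mem_filter, Finset.mem_piAntidiag, Finset.mem_univ, implies_true,
      and_true, and_imp] at hy hmin
    refine Finset.mem_image.2 ⟨y, ?_, hy.2⟩
    simp only [Finset.mem_filter, Finset.mem_piAntidiag, Finset.mem_univ, implies_true,
      and_true]
    refine ⟨hy.1, ?_⟩
    rintro ⟨z, hzy, hza, hlt⟩
    exact (hmin z (hzy.trans hy.1) (hza.trans hy.2)).not_gt hlt
  · intro x hx y hy hxy
    simp only [Finset.coe_filter, Finset.mem_piAntidiag, Finset.mem_univ, implies_true, and_true,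
      Set.mem_ofPred_eq] at hx hy
    rcases lt_trichotomy (toLex x) (toLex y) with hlt | heq | hlt
    · exact (hy.2 ⟨x, hx.1.trans hy.1.symm, hxy, hlt⟩).elim
    · exact toLex.injective heq
    · exact (hx.2 ⟨y, hy.1.trans hx.1.symm, hxy.symm, hlt⟩).elim

end Representation

theorem stmt_9 {S : Type*} [AddCommMonoid S] [DecidableEq S]
    (A : Finset S) (hA : A.Nonempty) (k : ℕ) (hk : A.card = k) :
    ∃ p : Polynomial ℚ, p.natDegree ≤ k - 1 ∧ ∃ h₀ : ℕ, ∀ h ≥ h₀,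
      ((h • A).card : ℚ) = p.eval (h : ℚ) := by
  classical
  let e := (A.equivFinOfCardEq hk).symm
  let a : Fin k → S := fun i ↦ e i
  have ha : Finset.univ.image a = A := by
    ext s
    simp only [Finset.mem_image, Finset.mem_univ, true_and]
    exact ⟨fun ⟨i, hi⟩ ↦ hi ▸ (e i).2, fun hs ↦ ⟨e.symm ⟨s, hs⟩, by simp [a]⟩⟩
  have : Nonempty (Fin k) := ⟨e.symm ⟨_, hA.choose_spec⟩⟩
  obtain ⟨p, hp, h₀, hp'⟩ := Finset.exists_polynomial_card_filter_notMem_of_isUpperSet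
    (isUpperSet_nonminimalRepresentations a)
  refine ⟨p, by simpa using hp, h₀, fun h hh ↦ ?_⟩
  rw [← hp' h hh, ← card_nsmul_image_univ, ha]
end
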